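/- For every m ≥ 2, the algebra B_1 = A(1,m,m−1) is geometrically irreducible: for all d, e ∈ ℕ the Zariski-closed subset {(V, U, Z) ∈ M_{d×d}(k) × M_{e×e}(k) × M_{d×e}(k) : V^m = 0, U^m = 0, Σ_{i=0}^{m−1} V^{m−1−i} Z U^{i} = 0} is irreducible. -/

import Mathlib

/-!
Formalization of a statement from:
"Algebras with irreducible module varieties: two-vertex case completed"
-/

universe u v

open Quiver

noncomputable section

/-- The Zariski topology on the affine coordinate space `ι → k`: it is generated by the
basic open sets `{x | p(x) ≠ 0}` for multivariate polynomials `p`. -/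
def zariskiTop (k : Type u) [CommSemiring k] (ι : Type v) : TopologicalSpace (ι → k) :=
  TopologicalSpace.generateFrom
    {U | ∃ p : MvPolynomial ι k, U = {x | MvPolynomial.eval x p ≠ 0}}

/-- The ambient affine space for the representation varieties of `B₁ = A(1, m, m-1)` with
dimension vector `(d, e)`: a `d × d` matrix, an `e × e` matrix and a `d × e` matrix. -/
def BSpace (k : Type u) [Field k] (d e : ℕ) : Type u :=
  Matrix (Fin d) (Fin d) k × Matrix (Fin e) (Fin e) k × Matrix (Fin d) (Fin e) k

/-- The index type for the affine coordinates on `BSpace`. -/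
def BIdx (d e : ℕ) : Type := (Fin d × Fin d) ⊕ (Fin e × Fin e) ⊕ (Fin d × Fin e)

/-- The affine coordinates on `BSpace`. -/
def bCoords {k : Type u} [Field k] {d e : ℕ} (x : BSpace k d e) : BIdx d e → k
  | Sum.inl i => x.1 i.1 i.2
  | Sum.inr (Sum.inl i) => x.2.1 i.1 i.2
  | Sum.inr (Sum.inr i) => x.2.2 i.1 i.2

/-- The Zariski topology on `BSpace`. -/
def bTop (k : Type u) [Field k] (d e : ℕ) : TopologicalSpace (BSpace k d e) :=
  (zariskiTop k (BIdx d e)).induced bCoords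

/-!
The triple `(V, U, Z)` lies in the variety iff the block matrix `T = [[V, Z], [0, U]]` satisfies
`T ^ m = 0`, so its points are extensions of nilpotent modules killed by `X ^ m`. Call such a
nilpotent matrix generic if at most one of its Jordan blocks is smaller than `m`; its size then
determines it up to conjugation.

The points with `V` and `U` generic form an irreducible set: after conjugating by block diagonal
matrices, two of them differ only in `Z`, on which the equations are linear, and a rational curve of
conjugates joins them.

They are also dense. If `V` has two Jordan blocks smaller than `m`, then, after perturbing `Z`,
`T` can be deformed inside the variety so as to lengthen the longer of these blocks at the expense
of the other, which enlarges the rank of a power of `V` and lowers no rank of a power of `V` or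
`U`. Transposition exchanges `V` and `U`, and these ranks are bounded, so that finitely many
deformations lead to the generic locus.
-/

section Ring

theorem add_pow_of_mul_pow_mul_eq_zero {R : Type*} [Semiring R] {a b : R}
    (h : ∀ n, b * a ^ n * b = 0) (N : ℕ) :
    (a + b) ^ N = a ^ N + ∑ i ∈ Finset.range N, a ^ (N - 1 - i) * b * a ^ i := by
  induction N with
  | zero => simp
  | succ N ih =>
    have hb : b * ∑ i ∈ Finset.range N, a ^ (N - 1 - i) * b * a ^ i = 0 := by
      rw [Finset.mul_sum]
      refine Finset.sum_eq_zero fun i _ => ?_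
      rw [← mul_assoc, ← mul_assoc, h, zero_mul]
    have ha : a * ∑ i ∈ Finset.range N, a ^ (N - 1 - i) * b * a ^ i =
        ∑ i ∈ Finset.range N, a ^ (N - i) * b * a ^ i := by
      rw [Finset.mul_sum]
      refine Finset.sum_congr rfl fun i hi => ?_
      have hi' : N - i = N - 1 - i + 1 := by have := Finset.mem_range.1 hi; omega
      simp only [hi', pow_succ', mul_assoc]
    rw [pow_succ', ih, add_mul, mul_add, mul_add, hb, ha, Finset.sum_range_succ, ← pow_succ']
    simp [add_assoc]

theorem add_commutator_pow_eq_zero {R : Type*} [Ring R] {a b : R} {m : ℕ} (ha : a ^ m = 0)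
    (hbb : b * b = 0) (hbab : b * a * b = 0) : (a + (a * b - b * a)) ^ m = 0 := by
  let u : Rˣ := ⟨1 - b, 1 + b, by noncomm_ring; simp [hbb], by noncomm_ring; simp [hbb]⟩
  have hu : a + (a * b - b * a) = u * a * ↑u⁻¹ := by
    have h : (1 - b) * a * (1 + b) = a + (a * b - b * a) - b * a * b := by noncomm_ring
    exact (h.trans (by rw [hbab, sub_zero])).symm
  rw [hu, Units.conj_pow, ha, mul_zero, zero_mul]

end Ring

section RankOne

open Module

variable {k E : Type*} [Field k] [AddCommGroup E] [Module k E]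

theorem finrank_range_lt_finrank_range_add_smulRight [FiniteDimensional k E] {A : End k E}
    {φ : Dual k E} {u v : E} (hu : A u = 0) (hφ : φ u ≠ 0) (hv : v ∉ LinearMap.range A) :
    finrank k (LinearMap.range A) < finrank k (LinearMap.range (A + φ.smulRight v)) := by
  have hvB : v ∈ LinearMap.range (A + φ.smulRight v) :=
    ⟨(φ u)⁻¹ • u, by simp [hu, hφ]⟩
  refine Submodule.finrank_lt_finrank_of_lt (lt_of_le_of_ne ?_ fun h => hv (h ▸ hvB))
  rintro _ ⟨x, rfl⟩
  have hx : (A + φ.smulRight v) x - φ x • v = A x := by simp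
  exact hx ▸ Submodule.sub_mem _ ⟨x, rfl⟩ (Submodule.smul_mem _ _ hvB)

theorem pow_add_smulRight {T : End k E} {φ : Dual k E} {z : E} (h : ∀ p, φ ((T ^ p) z) = 0)
    (N : ℕ) : (T + φ.smulRight z) ^ N =
      T ^ N + ∑ i ∈ Finset.range N, (φ.comp (T ^ i)).smulRight ((T ^ (N - 1 - i)) z) := by
  rw [add_pow_of_mul_pow_mul_eq_zero]
  · congr 1
    refine Finset.sum_congr rfl fun i _ => LinearMap.ext fun v => ?_
    simp
  · intro n
    ext v
    simp [h]

theorem add_smulRight_pow_eq_zero {T : End k E} {φ : Dual k E} {z : E} {m y : ℕ}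
    (hT : T ^ m = 0) (h : ∀ p, φ ((T ^ p) z) = 0) (hz : (T ^ y) z = 0)
    (hφ : ∀ q v, m ≤ q + y → φ ((T ^ q) v) = 0) : (T + φ.smulRight z) ^ m = 0 := by
  rw [pow_add_smulRight h, hT, zero_add]
  refine Finset.sum_eq_zero fun i _ => LinearMap.ext fun v => ?_
  by_cases hi : m ≤ i + y
  · simp [hφ i v hi]
  · have hy : (T ^ (m - 1 - i)) z = 0 := Module.End.pow_map_zero_of_le (by omega) hz
    simp [hy]

end RankOne

section JordanBasis

open Module Polynomial DirectSum

variable {k M : Type*} [Field k] [AddCommGroup M] [Module k M]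

/-- A Jordan basis of a nilpotent endomorphism `V`: a basis consisting of the chains
`gen i, V (gen i), …, V ^ (size i - 1) (gen i)`, where `V ^ size i` kills `gen i`. The number
`size i` is the size of the `i`-th Jordan block; empty blocks are excluded. -/
structure JordanBasis (V : End k M) where
  ι : Type
  [fintype : Fintype ι]
  size : ι → ℕ
  gen : ι → M
  basis : Basis (Σ i, Fin (size i)) k M
  basis_apply : ∀ x, basis x = (V ^ (x.2 : ℕ)) (gen x.1)
  pow_size_gen : ∀ i, (V ^ size i) (gen i) = 0
  size_pos : ∀ i, 0 < size i

theorem exists_basis_quotient_span_X_pow (k : Type*) [Field k] (n : ℕ) :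
    ∃ b : Basis (Fin n) k (k[X] ⧸ (k[X] ∙ (X : k[X]) ^ n)),
      ∀ p, b p = Submodule.Quotient.mk (X ^ (p : ℕ)) := by
  let b := (AdjoinRoot.powerBasis' (monic_X_pow (R := k) n)).basis
  let b' : Basis (Fin n) k (AdjoinRoot ((X : k[X]) ^ n)) := b.reindex (finCongr (by simp))
  have hb' : ∀ p, b' p = AdjoinRoot.mk _ (X ^ (p : ℕ)) := fun p => by
    rw [Basis.reindex_apply, PowerBasis.basis_eq_pow]
    simp
  exact ⟨b', hb'⟩

theorem dfinsupp_basis_apply {ι R : Type*} [DecidableEq ι] [Semiring R] {N : ι → Type*}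
    [∀ i, AddCommMonoid (N i)] [∀ i, Module R (N i)] {η : ι → Type*}
    (b : ∀ i, Basis (η i) R (N i)) (i : ι) (p : η i) :
    DFinsupp.basis b ⟨i, p⟩ = DFinsupp.single i (b i p) := by
  classical
  rw [Basis.apply_eq_iff]
  ext ⟨j, q⟩
  by_cases h : i = j
  · subst h
    simp [DFinsupp.basis, Finsupp.single_apply]
  · simp [DFinsupp.basis, h, DFinsupp.single_apply]

theorem exists_linearEquiv_directSum_of_isNilpotent [FiniteDimensional k M] {V : End k M}
    (hV : IsNilpotent V) :
    ∃ (d : ℕ) (n : Fin d → ℕ) (e : M ≃ₗ[k] ⨁ i, k[X] ⧸ (k[X] ∙ (X : k[X]) ^ n i)),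
      ∀ p w, e ((V ^ p) w) = (X : k[X]) ^ p • e w := by
  obtain ⟨m, hm⟩ := hV
  have htors : IsTorsion' (AEval' V) (Submonoid.powers (X : k[X])) := fun x => by
    obtain ⟨y, rfl⟩ := (AEval'.of V).surjective x
    refine ⟨⟨X ^ m, pow_mem (Submonoid.mem_powers X) m⟩, ?_⟩
    rw [Submonoid.mk_smul, AEval'.X_pow_smul_of, hm, zero_smul, map_zero]
  obtain ⟨d, n, ⟨e⟩⟩ := torsion_by_prime_power_decomposition (p := X) irreducible_X htors
  refine ⟨d, n, (AEval'.of V).trans (e.restrictScalars k), fun p w => ?_⟩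
  exact (congrArg e (AEval'.X_pow_smul_of V w p)).symm.trans (map_smul e _ _)

namespace JordanBasis

theorem nonempty_of_isNilpotent [FiniteDimensional k M] {V : End k M} (hV : IsNilpotent V) :
    Nonempty (JordanBasis V) := by
  obtain ⟨d, n, e, he⟩ := exists_linearEquiv_directSum_of_isNilpotent hV
  choose b hb using fun i => exists_basis_quotient_span_X_pow k (n i)
  let r (i : Fin d) : M := e.symm (lof k[X] (Fin d) _ i (Submodule.Quotient.mk 1))
  have hr : ∀ i p, (V ^ p) (r i) =
      e.symm (lof k[X] (Fin d) _ i (Submodule.Quotient.mk (X ^ p))) := fun i p => by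
    rw [LinearEquiv.eq_symm_apply, he, LinearEquiv.apply_symm_apply, ← map_smul,
      ← Submodule.Quotient.mk_smul, smul_eq_mul, mul_one]
  let σ : (Σ i, Fin (n i)) ≃ (Σ i : {i // 0 < n i}, Fin (n i)) :=
    { toFun := fun a => ⟨⟨a.1, a.2.pos⟩, a.2⟩
      invFun := fun a => ⟨a.1.1, a.2⟩ }
  refine ⟨{ ι := {i // 0 < n i}, size := fun i => n i, gen := fun i => r i,
            basis := ((DFinsupp.basis b).map e.symm).reindex σ,
            basis_apply := fun ⟨i, p⟩ => ?_, pow_size_gen := fun i => ?_,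
            size_pos := fun i => i.2 }⟩
  · rw [hr, Basis.reindex_apply, Basis.map_apply, ← hb]
    exact congrArg e.symm (dfinsupp_basis_apply b i.1 p)
  · rw [hr, (Submodule.Quotient.mk_eq_zero _).2 (Submodule.mem_span_singleton_self _), map_zero,
      map_zero]

attribute [instance] JordanBasis.fintype

variable {V : End k M} (c : JordanBasis V)

theorem pow_gen_eq_zero {i : c.ι} {p : ℕ} (hp : c.size i ≤ p) : (V ^ p) (c.gen i) = 0 :=
  End.pow_map_zero_of_le hp (c.pow_size_gen i)

theorem ext_gen {N : Type*} [AddCommGroup N] [Module k N] {f g : M →ₗ[k] N}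
    (h : ∀ i p, p < c.size i → f ((V ^ p) (c.gen i)) = g ((V ^ p) (c.gen i))) : f = g :=
  c.basis.ext fun x => by
    rw [c.basis_apply]
    exact h x.1 x.2 x.2.2

/-- The linear form reading off the coordinate at the last vector `V ^ (size i - 1) (gen i)` of
the `i`-th Jordan chain. -/
def top (i : c.ι) : Dual k M :=
  c.basis.coord ⟨i, ⟨c.size i - 1, Nat.sub_one_lt (c.size_pos i).ne'⟩⟩

open Classical in
theorem top_pow_gen (i j : c.ι) (p : ℕ) :
    c.top i ((V ^ p) (c.gen j)) = if j = i ∧ p + 1 = c.size i then 1 else 0 := by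
  rcases lt_or_ge p (c.size j) with hp | hp
  · rw [← c.basis_apply ⟨j, ⟨p, hp⟩⟩, top, Basis.coord_apply, Basis.repr_self,
      Finsupp.single_apply]
    congr 1
    rw [Sigma.mk.injEq, eq_iff_iff, and_congr_right_iff]
    rintro rfl
    rw [heq_iff_eq, Fin.mk.injEq]
    omega
  · rw [c.pow_gen_eq_zero hp, map_zero, if_neg]
    rintro ⟨rfl, h⟩
    omega

theorem top_pow_eq_zero {i : c.ι} {p : ℕ} (hp : c.size i ≤ p) (v : M) :
    c.top i ((V ^ p) v) = 0 := by
  classical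
  suffices h : c.top i ∘ₗ V ^ p = 0 from LinearMap.congr_fun h v
  refine c.ext_gen fun j q _ => ?_
  rw [LinearMap.comp_apply, ← Module.End.mul_apply, ← pow_add, top_pow_gen, if_neg (by omega),
    LinearMap.zero_apply]

theorem pow_gen_ne_zero {i : c.ι} {p : ℕ} (hp : p < c.size i) : (V ^ p) (c.gen i) ≠ 0 := by
  rw [← c.basis_apply ⟨i, ⟨p, hp⟩⟩]
  exact c.basis.ne_zero _

theorem size_le_of_pow_eq_zero {m : ℕ} (hV : V ^ m = 0) (i : c.ι) : c.size i ≤ m := by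
  by_contra! h
  exact c.pow_gen_ne_zero h (by rw [hV, LinearMap.zero_apply])

/-- `z` is a vector, killed by `V ^ y`, whose components in the Jordan blocks `i₀` and `i₁` are as
large as `size i₁ ≤ y ≤ size i₀` permits. Adding to `V` a multiple of
`(c.mergeForm i₀ i₁ y z).smulRight z` then merges the two blocks into one with a longer chain. -/
structure IsMergeVector (i₀ i₁ : c.ι) (y : ℕ) (z : M) : Prop where
  ne : i₀ ≠ i₁
  size_le : c.size i₁ ≤ y
  le_size : y ≤ c.size i₀
  pow_eq_zero : (V ^ y) z = 0
  top_left_ne_zero : c.top i₀ ((V ^ (y - 1)) z) ≠ 0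
  top_right_ne_zero : c.top i₁ ((V ^ (c.size i₁ - 1)) z) ≠ 0

/-- A linear form supported on the blocks `i₀` and `i₁`, with coefficients chosen so that it
vanishes on the `V`-orbit of `z`. -/
def mergeForm (i₀ i₁ : c.ι) (y : ℕ) (z : M) : Dual k M :=
  c.top i₁ ((V ^ (c.size i₁ - 1)) z) • c.top i₀ ∘ₗ V ^ (y - 1) -
    c.top i₀ ((V ^ (y - 1)) z) • c.top i₁ ∘ₗ V ^ (c.size i₁ - 1)

theorem mergeForm_pow_apply (i₀ i₁ : c.ι) (y q : ℕ) (z v : M) :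
    c.mergeForm i₀ i₁ y z ((V ^ q) v) =
      c.top i₁ ((V ^ (c.size i₁ - 1)) z) * c.top i₀ ((V ^ (y - 1 + q)) v) -
        c.top i₀ ((V ^ (y - 1)) z) * c.top i₁ ((V ^ (c.size i₁ - 1 + q)) v) := by
  simp [mergeForm, pow_add]

namespace IsMergeVector

variable {c} {i₀ i₁ : c.ι} {y : ℕ} {z : M}

theorem mergeForm_pow_eq_zero (h : c.IsMergeVector i₀ i₁ y z) {q : ℕ} (hq : c.size i₀ < q + y)
    (v : M) : c.mergeForm i₀ i₁ y z ((V ^ q) v) = 0 := by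
  have hy := h.le_size
  have hb := c.size_pos i₁
  rw [mergeForm_pow_apply, c.top_pow_eq_zero (p := y - 1 + q) (by omega),
    c.top_pow_eq_zero (p := c.size i₁ - 1 + q) (by omega), mul_zero, mul_zero, sub_zero]

theorem mergeForm_pow_self (h : c.IsMergeVector i₀ i₁ y z) (p : ℕ) :
    c.mergeForm i₀ i₁ y z ((V ^ p) z) = 0 := by
  have hb := c.size_pos i₁
  rw [mergeForm_pow_apply]
  rcases p.eq_zero_or_pos with rfl | hp
  · exact sub_eq_zero.2 (mul_comm _ _)
  · have hz : (V ^ (y - 1 + p)) z = 0 := End.pow_map_zero_of_le (by omega) h.pow_eq_zero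
    rw [hz, c.top_pow_eq_zero (p := c.size i₁ - 1 + p) (by omega), map_zero, mul_zero, mul_zero,
      sub_zero]

theorem mergeForm_eq_zero (h : c.IsMergeVector i₀ i₁ y z) {r : ℕ} {v : M}
    (hr : r < c.size i₁) (hv : (V ^ r) v = 0) : c.mergeForm i₀ i₁ y z v = 0 := by
  have hy := h.size_le
  have hv₀ : (V ^ (y - 1)) v = 0 := End.pow_map_zero_of_le (by omega) hv
  have hv₁ : (V ^ (c.size i₁ - 1)) v = 0 := End.pow_map_zero_of_le (by omega) hv
  simp [mergeForm, hv₀, hv₁]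

theorem mergeForm_pow_gen_ne_zero (h : c.IsMergeVector i₀ i₁ y z) :
    c.mergeForm i₀ i₁ y z ((V ^ (c.size i₀ - y)) (c.gen i₀)) ≠ 0 := by
  classical
  have hy := h.le_size
  have hb := (c.size_pos i₁).trans_le h.size_le
  rw [mergeForm_pow_apply, top_pow_gen, top_pow_gen, if_pos ⟨rfl, by omega⟩,
    if_neg (fun h' => h.ne h'.1), mul_one, mul_zero, sub_zero]
  exact h.top_right_ne_zero

theorem finrank_range_pow_lt (h : c.IsMergeVector i₀ i₁ y z) {t : k}
    (ht : t ≠ 0) :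
    finrank k (LinearMap.range (V ^ c.size i₀)) <
      finrank k (LinearMap.range ((V + (t • c.mergeForm i₀ i₁ y z).smulRight z) ^ c.size i₀)) := by
  have := Module.Finite.of_basis c.basis
  have hy := h.le_size
  have hb := (c.size_pos i₁).trans_le h.size_le
  -- Among the terms `(θ ∘ V ^ i).smulRight (V ^ (size i₀ - 1 - i) z)` of the expansion, those with
  -- `i > size i₀ - y` vanish through `θ` and those with `i < size i₀ - y` through `z`.
  rw [pow_add_smulRight fun p => by rw [LinearMap.smul_apply, h.mergeForm_pow_self, smul_zero],
    Finset.sum_eq_single (c.size i₀ - y)]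
  · refine finrank_range_lt_finrank_range_add_smulRight (c.pow_size_gen i₀)
      (mul_ne_zero ht h.mergeForm_pow_gen_ne_zero) ?_
    rintro ⟨v, hv⟩
    have hpow : c.size i₀ - 1 - (c.size i₀ - y) = y - 1 := by omega
    rw [hpow] at hv
    exact h.top_left_ne_zero (by rw [← hv, c.top_pow_eq_zero le_rfl])
  · intro i _ hi
    ext v
    rw [LinearMap.smulRight_apply, LinearMap.comp_apply, LinearMap.smul_apply]
    rcases hi.lt_or_gt with hi | hi
    · rw [End.pow_map_zero_of_le (by omega) h.pow_eq_zero, smul_zero, LinearMap.zero_apply]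
    · rw [h.mergeForm_pow_eq_zero (by omega), smul_zero, zero_smul, LinearMap.zero_apply]
  · intro hi
    exact absurd (Finset.mem_range.2 (by omega)) hi

end IsMergeVector

/-- The vector `V ^ (size i₀ - y) (gen i₀) + gen i₁`, whose generic multiples, added to any vector
killed by `V ^ y`, make it a merge vector for the blocks `i₀` and `i₁`. -/
def mergeVector (i₀ i₁ : c.ι) (y : ℕ) : M :=
  (V ^ (c.size i₀ - y)) (c.gen i₀) + c.gen i₁

theorem pow_mergeVector (i₀ i₁ : c.ι) (y p : ℕ) : (V ^ p) (c.mergeVector i₀ i₁ y) =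
    (V ^ (p + (c.size i₀ - y))) (c.gen i₀) + (V ^ p) (c.gen i₁) := by
  rw [mergeVector, map_add, pow_add, End.mul_apply]

theorem eventually_isMergeVector {i₀ i₁ : c.ι} {y : ℕ} {z : M} (hne : i₀ ≠ i₁)
    (hle : c.size i₁ ≤ y) (hge : y ≤ c.size i₀) (hz : (V ^ y) z = 0) :
    ∀ᶠ s : k in Filter.cofinite, c.IsMergeVector i₀ i₁ y (z + s • c.mergeVector i₀ i₁ y) := by
  classical
  have hb := (c.size_pos i₁).trans_le hle
  have hpos := c.size_pos i₁
  have hpow : (V ^ y) (c.mergeVector i₀ i₁ y) = 0 := by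
    rw [pow_mergeVector, c.pow_gen_eq_zero (by omega), c.pow_gen_eq_zero hle, add_zero]
  have htop₀ : c.top i₀ ((V ^ (y - 1)) (c.mergeVector i₀ i₁ y)) = 1 := by
    rw [pow_mergeVector, map_add, top_pow_gen, top_pow_gen, if_pos ⟨rfl, by omega⟩,
      if_neg (fun h => hne h.1.symm), add_zero]
  have htop₁ : c.top i₁ ((V ^ (c.size i₁ - 1)) (c.mergeVector i₀ i₁ y)) = 1 := by
    rw [pow_mergeVector, map_add, top_pow_gen, top_pow_gen, if_neg (fun h => hne h.1),
      if_pos ⟨rfl, by omega⟩, zero_add]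
  filter_upwards [Filter.eventually_cofinite_ne (-c.top i₀ ((V ^ (y - 1)) z)),
    Filter.eventually_cofinite_ne (-c.top i₁ ((V ^ (c.size i₁ - 1)) z))] with s hs₀ hs₁
  refine ⟨hne, hle, hge, ?_, ?_, ?_⟩
  · rw [map_add, map_smul, hz, hpow, smul_zero, add_zero]
  · rw [map_add, map_smul, map_add, map_smul, htop₀, smul_eq_mul, mul_one]
    exact fun h => hs₀ (eq_neg_of_add_eq_zero_right h)
  · rw [map_add, map_smul, map_add, map_smul, htop₁, smul_eq_mul, mul_one]
    exact fun h => hs₁ (eq_neg_of_add_eq_zero_right h)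

end JordanBasis

end JordanBasis

section Extension

open Module

variable {k W E Q : Type*} [Field k] [AddCommGroup W] [Module k W] [AddCommGroup E] [Module k E]
  [AddCommGroup Q] [Module k Q]

theorem mul_sum_smulRight_sub_sum_smulRight_mul (T : End k E) (φ : Dual k E) (g : E) (x : ℕ) :
    T * ∑ q ∈ Finset.range x, (φ ∘ₗ T ^ q).smulRight ((T ^ (x - 1 - q)) g) -
        (∑ q ∈ Finset.range x, (φ ∘ₗ T ^ q).smulRight ((T ^ (x - 1 - q)) g)) * T =
      φ.smulRight ((T ^ x) g) - (φ ∘ₗ T ^ x).smulRight g := by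
  let F (q : ℕ) : End k E := (φ ∘ₗ T ^ q).smulRight ((T ^ (x - q)) g)
  have hF : ∑ q ∈ Finset.range x, (F q - F (q + 1)) =
      φ.smulRight ((T ^ x) g) - (φ ∘ₗ T ^ x).smulRight g := by
    rw [Finset.sum_range_sub']
    simp [F, End.one_eq_id]
  rw [← hF, Finset.mul_sum, Finset.sum_mul, ← Finset.sum_sub_distrib]
  refine Finset.sum_congr rfl fun q hq => LinearMap.ext fun v => ?_
  have hq₁ : x - q = x - 1 - q + 1 := by have := Finset.mem_range.1 hq; omega
  have hq₂ : x - (q + 1) = x - 1 - q := by omega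
  simp only [F, hq₁, hq₂, LinearMap.sub_apply, End.mul_apply, LinearMap.smulRight_apply,
    LinearMap.comp_apply, map_smul, pow_succ]
  rw [← End.mul_apply T, ← pow_succ', pow_succ, End.mul_apply]

theorem sum_smulRight_mul_pow_mul_eq_zero {T : End k E} {φ : Dual k E} {g : E}
    (h : ∀ n, φ ((T ^ n) g) = 0) (x n : ℕ) :
    (∑ q ∈ Finset.range x, (φ ∘ₗ T ^ q).smulRight ((T ^ (x - 1 - q)) g)) * T ^ n *
      ∑ q ∈ Finset.range x, (φ ∘ₗ T ^ q).smulRight ((T ^ (x - 1 - q)) g) = 0 := by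
  rw [Finset.mul_sum]
  refine Finset.sum_eq_zero fun q _ => ?_
  rw [Finset.sum_mul, Finset.sum_mul]
  refine Finset.sum_eq_zero fun r _ => LinearMap.ext fun v => ?_
  have hv : φ ((T ^ r) ((T ^ n) ((T ^ (x - 1 - q)) g))) = 0 := by
    rw [← End.mul_apply, ← End.mul_apply, ← pow_add, ← pow_add, h]
  simp [hv]

/-- `S` is a direction in which `T` can be deformed, preserving `T ^ m = 0` and the invariance of
the submodule `W`, so that the action `V` of `T` on `W` gets a power of larger rank. -/
structure IsRankRaising (m : ℕ) (T : End k E) (V : End k W) (ι : W →ₗ[k] E) (S : End k E) :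
    Prop where
  pow_eq_zero : ∀ t : k, (T + t • S) ^ m = 0
  exists_finrank_lt : ∃ S' : End k W, (∀ w, S (ι w) = ι (S' w)) ∧ ∃ a < m, ∀ t : k, t ≠ 0 →
    finrank k (LinearMap.range (V ^ a)) < finrank k (LinearMap.range ((V + t • S') ^ a))

theorem JordanBasis.IsMergeVector.isRankRaising {m : ℕ} {T S : End k E}
    {V : End k W} {ι : W →ₗ[k] E} {cV : JordanBasis V} {i₀ i₁ : cV.ι} {y : ℕ} {z : W}
    (h : cV.IsMergeVector i₀ i₁ y z) (hm : cV.size i₀ < m)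
    (hS : ∀ w, S (ι w) = cV.mergeForm i₀ i₁ y z w • ι z) (hT : ∀ t : k, (T + t • S) ^ m = 0) :
    IsRankRaising m T V ι S where
  pow_eq_zero := hT
  exists_finrank_lt := by
    refine ⟨(cV.mergeForm i₀ i₁ y z).smulRight z, fun w => by simp [hS], _, hm, fun t ht => ?_⟩
    have hsmul : t • (cV.mergeForm i₀ i₁ y z).smulRight z =
        (t • cV.mergeForm i₀ i₁ y z).smulRight z := by ext; simp [mul_smul]
    rw [hsmul]
    exact h.finrank_range_pow_lt ht

/-- `0 → W → E → Q → 0` is a short exact sequence of `k[X]`-modules, where `X` acts as `V`, `T`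
and `U` respectively. -/
structure IsExtension (T : End k E) (V : End k W) (U : End k Q) (ι : W →ₗ[k] E) (π : E →ₗ[k] Q) :
    Prop where
  injective : Function.Injective ι
  surjective : Function.Surjective π
  exact : Function.Exact ι π
  apply_left : ∀ w, T (ι w) = ι (V w)
  apply_right : ∀ v, π (T v) = U (π v)

namespace IsExtension

variable {T : End k E} {V : End k W} {U : End k Q} {ι : W →ₗ[k] E} {π : E →ₗ[k] Q} {m : ℕ}

theorem pow_left (h : IsExtension T V U ι π) (p : ℕ) (w : W) : (T ^ p) (ι w) = ι ((V ^ p) w) := by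
  induction p with
  | zero => rfl
  | succ p ih => rw [pow_succ', pow_succ', End.mul_apply, ih, h.apply_left, End.mul_apply]

theorem pow_right (h : IsExtension T V U ι π) (p : ℕ) (v : E) :
    π ((T ^ p) v) = (U ^ p) (π v) := by
  induction p with
  | zero => rfl
  | succ p ih => rw [pow_succ', pow_succ', End.mul_apply, h.apply_right, ih, End.mul_apply]

theorem pow_right_eq_zero (h : IsExtension T V U ι π) (hT : T ^ m = 0) : U ^ m = 0 :=
  LinearMap.ext fun u => by
    obtain ⟨v, rfl⟩ := h.surjective u
    rw [← h.pow_right, hT, LinearMap.zero_apply, LinearMap.zero_apply, map_zero]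

variable {cU : JordanBasis U} {g : cU.ι → E}

theorem exists_section (hg : ∀ j, π (g j) = cU.gen j) (h : IsExtension T V U ι π) :
    ∃ σ : Q →ₗ[k] E, π ∘ₗ σ = LinearMap.id ∧
      ∀ j p, p < cU.size j → σ ((U ^ p) (cU.gen j)) = (T ^ p) (g j) := by
  have hσ : ∀ j p, p < cU.size j →
      cU.basis.constr k (fun x => (T ^ (x.2 : ℕ)) (g x.1)) ((U ^ p) (cU.gen j)) =
        (T ^ p) (g j) := fun j p hp => by
    rw [← cU.basis_apply ⟨j, ⟨p, hp⟩⟩, Basis.constr_basis]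
  refine ⟨_, cU.ext_gen fun j p hp => ?_, hσ⟩
  rw [LinearMap.comp_apply, hσ j p hp, h.pow_right, hg, LinearMap.id_apply]

theorem exists_form (hg : ∀ j, π (g j) = cU.gen j) (h : IsExtension T V U ι π) (θ : Dual k W) :
    ∃ φ : Dual k E, (∀ w, φ (ι w) = θ w) ∧ ∀ j p, p < cU.size j → φ ((T ^ p) (g j)) = 0 := by
  obtain ⟨σ, -, hσg⟩ := h.exists_section hg
  obtain ⟨ρ, hρ⟩ := LinearMap.exists_leftInverse_of_injective ι (LinearMap.ker_eq_bot.2 h.injective)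
  refine ⟨θ ∘ₗ ρ ∘ₗ (LinearMap.id - σ ∘ₗ π), fun w => ?_, fun j p hp => ?_⟩
  · have hw : ρ (ι w) = w := LinearMap.congr_fun hρ w
    simp [h.exact.apply_apply_eq_zero, hw]
  · simp [h.pow_right, hg, hσg j p hp]

theorem form_eq_zero (hg : ∀ j, π (g j) = cU.gen j) (h : IsExtension T V U ι π) {f : Dual k E}
    (hι : ∀ w, f (ι w) = 0) (hf : ∀ j p, p < cU.size j → f ((T ^ p) (g j)) = 0) : f = 0 := by
  obtain ⟨σ, hσ, hσg⟩ := h.exists_section hg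
  have hfσ : f ∘ₗ σ = 0 := cU.ext_gen fun j p hp => by
    rw [LinearMap.comp_apply, hσg j p hp, hf j p hp, LinearMap.zero_apply]
  ext v
  obtain ⟨w, hw⟩ : v - σ (π v) ∈ Set.range ι :=
    (h.exact _).1 (by rw [map_sub, sub_eq_zero]; exact (LinearMap.congr_fun hσ (π v)).symm)
  have hv := hι w
  rw [hw, map_sub, sub_eq_zero] at hv
  exact hv.trans (LinearMap.congr_fun hfσ (π v))

theorem exists_pow_size_eq (hg : ∀ j, π (g j) = cU.gen j) (h : IsExtension T V U ι π) (j : cU.ι) :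
    ∃ z, ι z = (T ^ cU.size j) (g j) :=
  (h.exact _).1 (by rw [h.pow_right, hg, cU.pow_size_gen])

theorem pow_eq_zero_of_pow_size_eq (h : IsExtension T V U ι π) (hT : T ^ m = 0) {j : cU.ι}
    {z : W} (hz : ι z = (T ^ cU.size j) (g j)) : (V ^ (m - cU.size j)) z = 0 := by
  have hj := cU.size_le_of_pow_eq_zero (h.pow_right_eq_zero hT) j
  refine h.injective ?_
  rw [← h.pow_left, hz, ← End.mul_apply, ← pow_add, Nat.sub_add_cancel hj, hT,
    LinearMap.zero_apply, map_zero]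

theorem add_smulRight (h : IsExtension T V U ι π) (κ : Dual k Q) (w : W) :
    IsExtension (T + (κ ∘ₗ π).smulRight (ι w)) V U ι π where
  injective := h.injective
  surjective := h.surjective
  exact := h.exact
  apply_left v := by simp [h.apply_left, h.exact.apply_apply_eq_zero]
  apply_right v := by simp [h.apply_right, h.exact.apply_apply_eq_zero]

theorem form_comp_pow_left (h : IsExtension T V U ι π) (κ : Dual k Q) (w : W) (p : ℕ) :
    (κ ∘ₗ π) ((T ^ p) (ι w)) = 0 := by
  rw [LinearMap.comp_apply, h.pow_left, h.exact.apply_apply_eq_zero, map_zero]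

theorem add_smulRight_top_pow_eq_zero (h : IsExtension T V U ι π) (hT : T ^ m = 0) (j : cU.ι)
    {w : W} (hw : (V ^ (m - cU.size j)) w = 0) (s : k) :
    (T + ((s • cU.top j) ∘ₗ π).smulRight (ι w)) ^ m = 0 := by
  refine add_smulRight_pow_eq_zero (y := m - cU.size j) hT (h.form_comp_pow_left _ w) ?_
    fun q v hq => ?_
  · rw [h.pow_left, hw, map_zero]
  · have hj := cU.size_le_of_pow_eq_zero (h.pow_right_eq_zero hT) j
    rw [LinearMap.comp_apply, h.pow_right, LinearMap.smul_apply, cU.top_pow_eq_zero (by omega),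
      smul_zero]

theorem add_smulRight_top_pow_size (h : IsExtension T V U ι π) (hg : ∀ j, π (g j) = cU.gen j)
    (j : cU.ι) (w : W) (s : k) :
    ((T + ((s • cU.top j) ∘ₗ π).smulRight (ι w)) ^ cU.size j) (g j) =
      (T ^ cU.size j) (g j) + s • ι w := by
  classical
  have hpos := cU.size_pos j
  have htop : ∀ i, ((s • cU.top j) ∘ₗ π) ((T ^ i) (g j)) =
      if i = cU.size j - 1 then s else 0 := fun i => by
    rw [LinearMap.comp_apply, h.pow_right, hg, LinearMap.smul_apply, cU.top_pow_gen, smul_eq_mul,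
      mul_ite, mul_one, mul_zero]
    exact if_congr (by rw [eq_self_iff_true, true_and]; omega) rfl rfl
  rw [pow_add_smulRight (h.form_comp_pow_left _ w), LinearMap.add_apply, LinearMap.sum_apply]
  simp only [LinearMap.smulRight_apply, LinearMap.comp_apply] at htop ⊢
  simp [htop, hpos]

variable {cV : JordanBasis V} {i₀ i₁ : cV.ι} {z : W}

theorem exists_isRankRaising_of_forall (h : IsExtension T V U ι π) (hT : T ^ m = 0)
    (hz : cV.IsMergeVector i₀ i₁ (cV.size i₁) z) (hm : cV.size i₀ < m)
    (hj : ∀ j, m < cV.size i₁ + cU.size j ∨ cV.size i₀ + cU.size j < m) :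
    ∃ S, IsRankRaising m T V ι S := by
  choose g hg using fun j => h.surjective (cU.gen j)
  obtain ⟨φ, hφι, hφg⟩ := h.exists_form hg (cV.mergeForm i₀ i₁ (cV.size i₁) z)
  have hφT : ∀ q v, m ≤ q + cV.size i₁ → φ ((T ^ q) v) = 0 := fun q v hq => by
    refine LinearMap.congr_fun (h.form_eq_zero hg (f := φ ∘ₗ T ^ q) (fun w => ?_)
      fun j p _ => ?_) v
    · rw [LinearMap.comp_apply, h.pow_left, hφι, hz.mergeForm_pow_eq_zero (by omega)]
    rw [LinearMap.comp_apply, ← End.mul_apply, ← pow_add]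
    rcases lt_or_ge (q + p) (cU.size j) with hqp | hqp
    · exact hφg j _ hqp
    obtain ⟨w, hw⟩ := h.exists_pow_size_eq hg j
    have hwV := h.pow_eq_zero_of_pow_size_eq hT hw
    rw [← Nat.sub_add_cancel hqp, pow_add, End.mul_apply, ← hw, h.pow_left, hφι]
    rcases hj j with hj | hj
    · refine hz.mergeForm_eq_zero (r := m - cU.size j) ?_ ?_
      · have := cV.size_pos i₁
        omega
      · rw [← End.mul_apply, ← pow_add, add_comm, pow_add, End.mul_apply, hwV, map_zero]
    · exact hz.mergeForm_pow_eq_zero (by omega) w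
  refine ⟨φ.smulRight (ι z), hz.isRankRaising hm
    (fun w => by rw [LinearMap.smulRight_apply, hφι]) fun t => ?_⟩
  have ht : t • φ.smulRight (ι z) = (t • φ).smulRight (ι z) := by ext; simp [mul_smul]
  rw [ht]
  refine add_smulRight_pow_eq_zero (y := cV.size i₁) hT (fun p => ?_) ?_ fun q v hq => ?_
  · rw [h.pow_left, LinearMap.smul_apply, hφι, hz.mergeForm_pow_self, smul_zero]
  · rw [h.pow_left, hz.pow_eq_zero, map_zero]
  · rw [LinearMap.smul_apply, hφT q v hq, smul_zero]

theorem exists_isRankRaising_of_pow_size_eq (h : IsExtension T V U ι π) (hT : T ^ m = 0)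
    (hg : ∀ j, π (g j) = cU.gen j) {j : cU.ι} (hgz : ι z = (T ^ cU.size j) (g j))
    (hz : cV.IsMergeVector i₀ i₁ (m - cU.size j) z) (hm : cV.size i₀ < m) :
    ∃ S, IsRankRaising m T V ι S := by
  obtain ⟨φ, hφι, hφg⟩ := h.exists_form hg (cV.mergeForm i₀ i₁ (m - cU.size j) z)
  have hφj : ∀ n, φ ((T ^ n) (g j)) = 0 := fun n => by
    rcases lt_or_ge n (cU.size j) with hn | hn
    · exact hφg j n hn
    · rw [← Nat.sub_add_cancel hn, pow_add, End.mul_apply, ← hgz, h.pow_left, hφι,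
        hz.mergeForm_pow_self]
  have hD := sum_smulRight_mul_pow_mul_eq_zero hφj (cU.size j)
  have hTD := mul_sum_smulRight_sub_sum_smulRight_mul T φ (g j) (cU.size j)
  set D := ∑ q ∈ Finset.range (cU.size j), (φ ∘ₗ T ^ q).smulRight ((T ^ (cU.size j - 1 - q)) (g j))
  -- This deformation only conjugates `T`, but by `hTD` it restricts on `W` to the rank one
  -- deformation that merges the two blocks.
  refine ⟨T * D - D * T, hz.isRankRaising hm (fun w => ?_) fun t => ?_⟩
  · have hle := hz.size_le
    have hpos := cV.size_pos i₁
    rw [hTD, LinearMap.sub_apply, LinearMap.smulRight_apply, LinearMap.smulRight_apply,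
      LinearMap.comp_apply, h.pow_left, hφι, hφι, hz.mergeForm_pow_eq_zero (by omega), zero_smul,
      sub_zero, hgz]
  · rw [smul_sub, ← mul_smul_comm, ← smul_mul_assoc]
    refine add_commutator_pow_eq_zero hT ?_ ?_
    · simpa using congrArg ((t * t) • ·) (hD 0)
    · simpa using congrArg ((t * t) • ·) (hD 1)

theorem exists_perturbation_isRankRaising [FiniteDimensional k Q] (h : IsExtension T V U ι π)
    (hT : T ^ m = 0) (cV : JordanBasis V) {i₀ i₁ : cV.ι} (hne : i₀ ≠ i₁)
    (hle : cV.size i₁ ≤ cV.size i₀) (hm : cV.size i₀ < m) [Infinite k] :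
    ∃ R : End k E, (∀ s : k, IsExtension (T + s • R) V U ι π ∧ (T + s • R) ^ m = 0) ∧
      ∀ᶠ s : k in Filter.cofinite, ∃ S, IsRankRaising m (T + s • R) V ι S := by
  obtain ⟨cU⟩ := JordanBasis.nonempty_of_isNilpotent ⟨m, h.pow_right_eq_zero hT⟩
  by_cases hj : ∀ j, m < cV.size i₁ + cU.size j ∨ cV.size i₀ + cU.size j < m
  · obtain ⟨s, hs⟩ := (cV.eventually_isMergeVector hne le_rfl hle
      (map_zero (V ^ cV.size i₁))).exists
    refine ⟨0, fun s => ?_, .of_forall fun s => ?_⟩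
    · rw [smul_zero, add_zero]
      exact ⟨h, hT⟩
    · rw [smul_zero, add_zero]
      exact h.exists_isRankRaising_of_forall hT hs hm hj
  · push Not at hj
    obtain ⟨j, hj₁, hj₀⟩ := hj
    -- The relation `ι z = T ^ size j (g j)` has to survive the deformation, so `z` itself must
    -- serve as the merge vector; the perturbation moves `z` along `w` into general position.
    choose g hg using fun j => h.surjective (cU.gen j)
    obtain ⟨z, hz⟩ := h.exists_pow_size_eq hg j
    have hVz := h.pow_eq_zero_of_pow_size_eq hT hz
    set w := cV.mergeVector i₀ i₁ (m - cU.size j) with hw_def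
    have hw : (V ^ (m - cU.size j)) w = 0 := by
      rw [hw_def, cV.pow_mergeVector, cV.pow_gen_eq_zero (by omega), cV.pow_gen_eq_zero (by omega),
        add_zero]
    have hR : ∀ s : k, s • (cU.top j ∘ₗ π).smulRight (ι w) =
        ((s • cU.top j) ∘ₗ π).smulRight (ι w) := fun s => by ext; simp [mul_smul]
    refine ⟨(cU.top j ∘ₗ π).smulRight (ι w), fun s => ?_, ?_⟩
    · rw [hR]
      exact ⟨h.add_smulRight _ w, h.add_smulRight_top_pow_eq_zero hT j hw s⟩
    · filter_upwards [cV.eventually_isMergeVector hne (by omega) (by omega) hVz] with s hs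
      rw [hR]
      refine (h.add_smulRight _ w).exists_isRankRaising_of_pow_size_eq
        (h.add_smulRight_top_pow_eq_zero hT j hw s) hg (j := j) ?_ hs hm
      rw [h.add_smulRight_top_pow_size hg, map_add, map_smul, hz]

end IsExtension

end Extension

section GenericType

open Module

variable {k M M' : Type*} [Field k] [AddCommGroup M] [Module k M] [AddCommGroup M'] [Module k M']
  {V : End k M} {V' : End k M'} {m : ℕ}

namespace JordanBasis

/-- The Jordan basis of `V'` induced by a Jordan basis of `V` and an isomorphism `L` intertwining
`δ • V` and `V'`. -/
def transport (c : JordanBasis V) (L : M ≃ₗ[k] M') (δ : kˣ) (h : ∀ v, V' (L v) = δ • L (V v)) :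
    JordanBasis V' :=
  have hpow : ∀ (p : ℕ) v, (V' ^ p) (L v) = δ ^ p • L ((V ^ p) v) := fun p v => by
    induction p with
    | zero => simp
    | succ p ih =>
      rw [pow_succ', pow_succ', pow_succ', End.mul_apply, ih, End.mul_apply, mul_comm, mul_smul,
        ← h, LinearMap.map_smul_of_tower]
  { ι := c.ι
    size := c.size
    gen := fun i => L (c.gen i)
    basis := (c.basis.map L).unitsSMul fun x => δ ^ (x.2 : ℕ)
    basis_apply := fun x => by
      rw [Basis.unitsSMul_apply, Basis.map_apply, c.basis_apply, hpow]
    pow_size_gen := fun i => by rw [hpow, c.pow_size_gen, map_zero, smul_zero]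
    size_pos := c.size_pos }

theorem exists_linearEquiv (c : JordanBasis V) (c' : JordanBasis V') (σ : c.ι ≃ c'.ι)
    (hσ : ∀ i, c'.size (σ i) = c.size i) : ∃ L : M ≃ₗ[k] M', ∀ v, L (V v) = V' (L v) := by
  let L : M ≃ₗ[k] M' := c.basis.equiv c'.basis (σ.sigmaCongr fun i => finCongr (hσ i).symm)
  have hL : ∀ i p, L ((V ^ p) (c.gen i)) = (V' ^ p) (c'.gen (σ i)) := fun i p => by
    rcases lt_or_ge p (c.size i) with hp | hp
    · rw [← c.basis_apply ⟨i, ⟨p, hp⟩⟩, Basis.equiv_apply, c'.basis_apply]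
      rfl
    · rw [c.pow_gen_eq_zero hp, c'.pow_gen_eq_zero (hp.trans' (hσ i).le), map_zero]
  refine ⟨L, LinearMap.congr_fun (f := L.toLinearMap ∘ₗ V) (g := V' ∘ₗ L.toLinearMap) ?_⟩
  refine c.ext_gen fun i p _ => ?_
  simp only [LinearMap.comp_apply, LinearEquiv.coe_coe]
  rw [hL, ← End.mul_apply, ← End.mul_apply, ← pow_succ', ← pow_succ', hL]

theorem finrank_eq_sum_size (c : JordanBasis V) : finrank k M = ∑ i, c.size i := by
  rw [finrank_eq_card_basis c.basis, Fintype.card_sigma]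
  simp only [Fintype.card_fin]

theorem nonempty_iff_finrank_pos (c : JordanBasis V) : Nonempty c.ι ↔ 0 < finrank k M := by
  simp [c.finrank_eq_sum_size, Finset.sum_pos_iff, c.size_pos, exists_true_iff_nonempty]

theorem exists_forall_ne_size_eq (c : JordanBasis V) [Nonempty c.ι] (hV : V ^ m = 0)
    (h : {i | c.size i < m}.Subsingleton) : ∃ i₀, ∀ i, i ≠ i₀ → c.size i = m := by
  by_cases hsmall : ∃ i₀, c.size i₀ < m
  · obtain ⟨i₀, hi₀⟩ := hsmall
    exact ⟨i₀, fun i hi => (c.size_le_of_pow_eq_zero hV i).eq_of_not_lt fun hlt => hi (h hlt hi₀)⟩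
  · push Not at hsmall
    exact ⟨Classical.arbitrary _, fun i _ => (c.size_le_of_pow_eq_zero hV i).antisymm (hsmall i)⟩

theorem finrank_sub_one_div_mod (c : JordanBasis V) (hV : V ^ m = 0) {i₀ : c.ι}
    (h : ∀ i, i ≠ i₀ → c.size i = m) :
    (finrank k M - 1) / m = Fintype.card c.ι - 1 ∧ (finrank k M - 1) % m = c.size i₀ - 1 := by
  classical
  have hle := c.size_le_of_pow_eq_zero hV i₀
  have hpos := c.size_pos i₀
  have hsum : finrank k M = c.size i₀ + (Fintype.card c.ι - 1) * m := by
    rw [c.finrank_eq_sum_size, ← Finset.add_sum_erase _ _ (Finset.mem_univ i₀),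
      Finset.sum_congr rfl fun i hi => h i (Finset.ne_of_mem_erase hi), Finset.sum_const,
      Finset.card_erase_of_mem (Finset.mem_univ _), Finset.card_univ, smul_eq_mul]
  refine (Nat.div_mod_unique (by omega)).2 ⟨?_, by omega⟩
  rw [hsum, mul_comm m]
  omega

theorem exists_equiv_size_eq (c : JordanBasis V) (c' : JordanBasis V') (hV : V ^ m = 0)
    (hV' : V' ^ m = 0) (h : {i | c.size i < m}.Subsingleton)
    (h' : {i | c'.size i < m}.Subsingleton) (hfin : finrank k M = finrank k M') :
    ∃ σ : c.ι ≃ c'.ι, ∀ i, c'.size (σ i) = c.size i := by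
  classical
  rcases isEmpty_or_nonempty c.ι with hι | hι
  · have hι' : IsEmpty c'.ι := by
      rwa [← not_nonempty_iff, c'.nonempty_iff_finrank_pos, ← hfin, ← c.nonempty_iff_finrank_pos,
        not_nonempty_iff]
    exact ⟨Equiv.equivOfIsEmpty _ _, isEmptyElim⟩
  have hι' : Nonempty c'.ι := by
    rwa [c'.nonempty_iff_finrank_pos, ← hfin, ← c.nonempty_iff_finrank_pos]
  obtain ⟨i₀, hi₀⟩ := c.exists_forall_ne_size_eq hV h
  obtain ⟨j₀, hj₀⟩ := c'.exists_forall_ne_size_eq hV' h'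
  obtain ⟨hcard, hsize⟩ := c.finrank_sub_one_div_mod hV hi₀
  obtain ⟨hcard', hsize'⟩ := c'.finrank_sub_one_div_mod hV' hj₀
  rw [hfin] at hcard hsize
  have hιι' : Fintype.card c.ι = Fintype.card c'.ι := by
    have := Fintype.card_pos (α := c.ι)
    have := Fintype.card_pos (α := c'.ι)
    omega
  refine ⟨(Fintype.equivOfCardEq hιι').setValue i₀ j₀, fun i => ?_⟩
  rcases eq_or_ne i i₀ with rfl | hi
  · have := c.size_pos i
    have := c'.size_pos j₀
    rw [Equiv.setValue_eq]
    omega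
  · rw [hi₀ i hi]
    exact hj₀ _ fun h => hi <| ((Fintype.equivOfCardEq hιι').setValue i₀ j₀).injective <|
      h.trans (Equiv.setValue_eq _ i₀ j₀).symm

end JordanBasis

/-- `V ^ m = 0` and all Jordan blocks of `V`, with at most one exception, have the maximal
size `m`. -/
def IsGeneric (m : ℕ) (V : End k M) : Prop :=
  V ^ m = 0 ∧ ∃ c : JordanBasis V, {i | c.size i < m}.Subsingleton

theorem IsGeneric.exists_linearEquiv (h : IsGeneric m V) (h' : IsGeneric m V')
    (hfin : finrank k M = finrank k M') : ∃ L : M ≃ₗ[k] M', ∀ v, L (V v) = V' (L v) := by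
  obtain ⟨hV, c, hc⟩ := h
  obtain ⟨hV', c', hc'⟩ := h'
  obtain ⟨σ, hσ⟩ := c.exists_equiv_size_eq c' hV hV' hc hc' hfin
  exact c.exists_linearEquiv c' σ hσ

theorem IsGeneric.of_linearEquiv (h : IsGeneric m V) (hV' : V' ^ m = 0) (L : M ≃ₗ[k] M') (δ : kˣ)
    (hL : ∀ v, V' (L v) = δ • L (V v)) : IsGeneric m V' :=
  ⟨hV', h.2.choose.transport L δ hL, h.2.choose_spec⟩

theorem exists_size_le_size_lt_of_not_isGeneric [FiniteDimensional k M] (hV : V ^ m = 0)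
    (h : ¬IsGeneric m V) :
    ∃ (c : JordanBasis V) (i₀ i₁ : c.ι), i₀ ≠ i₁ ∧ c.size i₁ ≤ c.size i₀ ∧ c.size i₀ < m := by
  obtain ⟨c⟩ := JordanBasis.nonempty_of_isNilpotent ⟨m, hV⟩
  have hc : ¬{i | c.size i < m}.Subsingleton := fun hc => h ⟨hV, c, hc⟩
  rw [Set.not_subsingleton_iff] at hc
  obtain ⟨i, hi, j, hj, hij⟩ := hc
  rcases le_total (c.size i) (c.size j) with hle | hle
  · exact ⟨c, j, i, hij.symm, hle, hj⟩
  · exact ⟨c, i, j, hij, hle, hi⟩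

section Matrix

variable {n : Type*} [Fintype n] {A B g : Matrix n n k}

theorem semiconjBy_transpose (h : SemiconjBy g A B) :
    SemiconjBy g.transpose B.transpose A.transpose := by
  simpa [SemiconjBy] using (congrArg Matrix.transpose h.eq).symm

variable [DecidableEq n]

theorem IsGeneric.exists_isUnit_semiconjBy (hA : IsGeneric m (Matrix.toLin' A))
    (hB : IsGeneric m (Matrix.toLin' B)) : ∃ g, IsUnit g ∧ SemiconjBy g A B := by
  obtain ⟨L, hL⟩ := hA.exists_linearEquiv hB rfl
  refine ⟨LinearMap.toMatrix' L.toLinearMap, ?_, ?_⟩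
  · refine IsUnit.of_mul_eq_one (LinearMap.toMatrix' L.symm.toLinearMap) ?_
    rw [← LinearMap.toMatrix'_comp, LinearEquiv.comp_symm, LinearMap.toMatrix'_id]
  · refine Matrix.toLin'.injective (LinearMap.ext fun v => ?_)
    simpa [Matrix.toLin'_mul] using hL v

theorem IsGeneric.of_semiconjBy (hA : IsGeneric m (Matrix.toLin' A)) (hg : IsUnit g) {δ : k}
    (hδ : δ ≠ 0) (h : SemiconjBy g (δ • A) B) : IsGeneric m (Matrix.toLin' B) := by
  have hdet := (Matrix.isUnit_iff_isUnit_det g).1 hg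
  have hBm : B ^ m = 0 := by
    have hm := (h.pow_right m).eq
    have hAm : A ^ m = 0 := Matrix.toLin'.injective (by rw [Matrix.toLin'_pow, hA.1, map_zero])
    rwa [smul_pow, hAm, smul_zero, mul_zero, eq_comm, hg.mul_left_eq_zero] at hm
  refine hA.of_linearEquiv (by rw [← Matrix.toLin'_pow, hBm, map_zero])
    (Matrix.toLin'OfInv (Matrix.nonsing_inv_mul g hdet) (Matrix.mul_nonsing_inv g hdet))
    (Units.mk0 δ hδ) fun v => ?_
  have hv : (B * g).mulVec v = δ • (g * A).mulVec v := by
    rw [← h.eq, Matrix.mul_smul, Matrix.smul_mulVec]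
  change B.mulVec (g.mulVec v) = δ • g.mulVec (A.mulVec v)
  rwa [Matrix.mulVec_mulVec, Matrix.mulVec_mulVec]

theorem IsGeneric.exists_isUnit_transpose_semiconjBy
    (hA : IsGeneric m (Matrix.toLin' A.transpose)) (hB : IsGeneric m (Matrix.toLin' B.transpose)) :
    ∃ g, IsUnit g ∧ SemiconjBy g A B := by
  obtain ⟨g, hg, h⟩ := hB.exists_isUnit_semiconjBy hA
  exact ⟨g.transpose, (Matrix.isUnit_transpose g).2 hg, semiconjBy_transpose h⟩

theorem IsGeneric.transpose_of_semiconjBy (hA : IsGeneric m (Matrix.toLin' A.transpose))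
    (hg : IsUnit g) {δ : k} (hδ : δ ≠ 0) (h : SemiconjBy g (δ • A) B) :
    IsGeneric m (Matrix.toLin' B.transpose) := by
  obtain ⟨u, hu⟩ := (Matrix.isUnit_transpose g).2 hg
  have hu' := semiconjBy_transpose h
  rw [← hu] at hu'
  exact hA.of_semiconjBy u⁻¹.isUnit hδ hu'.units_inv_symm_left

end Matrix

end GenericType

section Semicontinuity

open Filter Polynomial

variable {k : Type*} [Field k]

theorem eventually_eval_ne_zero {p : k[X]} (hp : p ≠ 0) : ∀ᶠ t in cofinite, p.eval t ≠ 0 := by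
  filter_upwards [p.rootSet_finite k |>.compl_mem_cofinite]
  simp [mem_rootSet, hp]

variable {n : Type*} [Fintype n]

theorem exists_mul_mul_eq_one (A : Matrix n n k) :
    ∃ (P : Matrix (Fin A.rank) n k) (Q : Matrix n (Fin A.rank) k), P * A * Q = 1 := by
  classical
  obtain ⟨P, Q, e, -, -, h⟩ := A.exists_rank_normal_form
  refine ⟨P.submatrix (e.symm ∘ Sum.inl) id, Q.submatrix id (e.symm ∘ Sum.inl), ?_⟩
  calc P.submatrix (e.symm ∘ Sum.inl) id * A * Q.submatrix id (e.symm ∘ Sum.inl)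
      = (P * A * Q).submatrix (e.symm ∘ Sum.inl) (e.symm ∘ Sum.inl) := rfl
    _ = 1 := by
      rw [h]
      ext i j
      simp [Matrix.one_apply]

variable [DecidableEq n]

theorem eventually_le_rank_of_mul_mul_eq_one (P : Matrix n n k[X]) {t₀ : k} {r : ℕ}
    {L : Matrix (Fin r) n k} {R : Matrix n (Fin r) k}
    (h : L * (evalRingHom t₀).mapMatrix P * R = 1) :
    ∀ᶠ t in cofinite, r ≤ ((evalRingHom t).mapMatrix P).rank := by
  set p := (L.map C * P * R.map C).det
  have hp : ∀ t, p.eval t = (L * (evalRingHom t).mapMatrix P * R).det := fun t => by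
    rw [← coe_evalRingHom, RingHom.map_det, RingHom.mapMatrix_apply, Matrix.map_mul, Matrix.map_mul]
    simp only [Matrix.map_map, Function.comp_def, coe_evalRingHom, eval_C, Matrix.map_id',
      RingHom.mapMatrix_apply]
  have hp₀ : p ≠ 0 := fun h₀ => by simpa [h₀] using (hp t₀).trans (congrArg Matrix.det h)
  filter_upwards [eventually_eval_ne_zero hp₀] with t ht
  rw [hp, ← isUnit_iff_ne_zero, ← Matrix.isUnit_iff_isUnit_det] at ht
  calc r = (L * (evalRingHom t).mapMatrix P * R).rank := by
        rw [Matrix.rank_of_isUnit _ ht, Fintype.card_fin]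
    _ ≤ (L * (evalRingHom t).mapMatrix P).rank := Matrix.rank_mul_le_left _ _
    _ ≤ ((evalRingHom t).mapMatrix P).rank := Matrix.rank_mul_le_right _ _

theorem eventually_rank_le (P : Matrix n n k[X]) (t₀ : k) : ∀ᶠ t in cofinite,
    ((evalRingHom t₀).mapMatrix P).rank ≤ ((evalRingHom t).mapMatrix P).rank := by
  obtain ⟨L, R, h⟩ := exists_mul_mul_eq_one ((evalRingHom t₀).mapMatrix P)
  exact eventually_le_rank_of_mul_mul_eq_one P h

/-- The line through `A` with direction `B`, as a matrix of polynomials in the parameter. -/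
def polynomialLine (A B : Matrix n n k) : Matrix n n k[X] :=
  C.mapMatrix A + (X : k[X]) • C.mapMatrix B

theorem mapMatrix_polynomialLine (A B : Matrix n n k) (t : k) :
    (evalRingHom t).mapMatrix (polynomialLine A B) = A + t • B := by
  ext i j
  simp [polynomialLine, mul_comm t]

theorem exists_polynomial_conjugation {M : Matrix n n k} (hM : IsUnit M) (A B : Matrix n n k) :
    ∃ P : Matrix n n k[X], (evalRingHom 0).mapMatrix P = A ∧
      SemiconjBy M B ((evalRingHom 1).mapMatrix P) ∧ ∀ᶠ t : k in cofinite,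
        IsUnit (1 + t • (M - 1)) ∧ ∃ δ : k, δ ≠ 0 ∧
          SemiconjBy (1 + t • (M - 1)) (δ • (A + t • (B - A))) ((evalRingHom t).mapMatrix P) := by
  have hdet : M.det ≠ 0 := ((Matrix.isUnit_iff_isUnit_det M).1 hM).ne_zero
  let N := polynomialLine 1 (M - 1)
  -- Conjugation with the adjugate in place of the inverse scales by `N.det`; the factor `μ`
  -- compensates for this at the two ends `t = 0` and `t = 1`.
  let μ : k[X] := 1 + X * C (M.det⁻¹ - 1)
  have hP : ∀ t : k, (evalRingHom t).mapMatrix (μ • (N * polynomialLine A (B - A) * N.adjugate)) =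
      μ.eval t • ((1 + t • (M - 1)) * (A + t • (B - A)) * (1 + t • (M - 1)).adjugate) := fun t => by
    rw [← mapMatrix_polynomialLine, ← mapMatrix_polynomialLine A, ← RingHom.map_adjugate,
      ← map_mul, ← map_mul]
    ext i j
    simp [N]
  have hN : ∀ t, N.det.eval t = (1 + t • (M - 1)).det := fun t => by
    rw [← mapMatrix_polynomialLine, ← RingHom.map_det, coe_evalRingHom]
  have hsemiconj : ∀ t : k, SemiconjBy (1 + t • (M - 1))
      ((μ * N.det).eval t • (A + t • (B - A)))
      ((evalRingHom t).mapMatrix (μ • (N * polynomialLine A (B - A) * N.adjugate))) := fun t => by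
    rw [SemiconjBy, hP, Matrix.smul_mul, Matrix.mul_assoc _ _ (1 + t • (M - 1)),
      Matrix.adjugate_mul, eval_mul, hN, Matrix.mul_smul, mul_smul, Matrix.mul_smul,
      Matrix.mul_one]
  have hμN₀ : (μ * N.det).eval 0 = 1 := by simp [μ, hN]
  have hμN₁ : (μ * N.det).eval 1 = 1 := by simp [μ, hN, hdet]
  refine ⟨μ • (N * polynomialLine A (B - A) * N.adjugate), ?_, ?_, ?_⟩
  · simpa [μ] using hP 0
  · simpa [hμN₁] using hsemiconj 1
  · have hμN : μ * N.det ≠ 0 := fun h => by simp [h] at hμN₀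
    filter_upwards [eventually_eval_ne_zero hμN] with t ht
    refine ⟨?_, _, ht, hsemiconj t⟩
    rw [Matrix.isUnit_iff_isUnit_det, ← hN, isUnit_iff_ne_zero]
    exact right_ne_zero_of_mul (eval_mul (R := k) ▸ ht)

end Semicontinuity

section Topology

open Filter Topology

theorem isPreirreducible_of_forall_exists_curve {K X : Type*} [Infinite K] [TopologicalSpace X]
    {G : Set X}
    (h : ∀ x ∈ G, ∀ y ∈ G, ∃ c : K → X, (∀ t, Tendsto c cofinite (𝓝 (c t))) ∧
      (∀ᶠ t in cofinite, c t ∈ G) ∧ x ∈ Set.range c ∧ y ∈ Set.range c) :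
    IsPreirreducible G := by
  rintro A B hA hB ⟨x, hx, hxA⟩ ⟨y, hy, hyB⟩
  obtain ⟨c, hc, hcG, ⟨s, rfl⟩, ⟨t, rfl⟩⟩ := h x hx y hy
  obtain ⟨r, hr⟩ := (hcG.and (((hc s).eventually (hA.mem_nhds hxA)).and
    ((hc t).eventually (hB.mem_nhds hyB)))).exists
  exact ⟨c r, hr⟩

theorem subset_closure_of_forall_mem_closure_lt {X : Type*} [TopologicalSpace X] {S G : Set X}
    (f : X → ℕ) (hf : BddAbove (f '' S))
    (h : ∀ x ∈ S, x ∉ G → x ∈ closure {y ∈ S | f x < f y}) : S ⊆ closure G := by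
  obtain ⟨N, hN⟩ := hf
  intro x
  induction hn : N - f x using Nat.strong_induction_on generalizing x with
  | _ n ih =>
    intro hx
    by_cases hxG : x ∈ G
    · exact subset_closure hxG
    refine closure_minimal (fun y hy => ?_) isClosed_closure (h x hx hxG)
    have hyN := hN (Set.mem_image_of_mem f hy.1)
    have hxy := hy.2
    exact ih _ (by omega) rfl hy.1

end Topology

section Zariski

open Filter Topology Polynomial

variable {k : Type u} [Field k] {ι : Type v} {κ : Type*}

theorem tendsto_zariski (F : ι → k[X]) (t₀ : k) :
    Tendsto (fun t i => (F i).eval t) cofinite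
      (@nhds _ (zariskiTop k ι) fun i => (F i).eval t₀) := by
  rw [zariskiTop, TopologicalSpace.tendsto_nhds_generateFrom_iff]
  rintro _ ⟨p, rfl⟩ hp
  have heval : ∀ t, MvPolynomial.eval (fun i => (F i).eval t) p = (MvPolynomial.aeval F p).eval t :=
    fun t => by
      rw [MvPolynomial.eval_eq, MvPolynomial.aeval_def, MvPolynomial.eval₂_eq, eval_finsetSum]
      simp [eval_prod]
  simp only [Set.mem_ofPred_eq, heval] at hp
  simp only [Set.preimage_ofPred_eq, heval]
  exact eventually_eval_ne_zero fun h => hp (by rw [h, eval_zero])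

theorem continuous_zariski_comp (σ : κ → ι) :
    @Continuous _ _ (zariskiTop k ι) (zariskiTop k κ) fun f => f ∘ σ := by
  let _ := zariskiTop k ι
  refine continuous_generateFrom_iff.2 ?_
  rintro _ ⟨p, rfl⟩
  refine TopologicalSpace.isOpen_generateFrom_of_mem ⟨MvPolynomial.rename σ p, ?_⟩
  simp only [Set.preimage_ofPred_eq, MvPolynomial.eval_rename]

end Zariski

attribute [local instance] bTop

namespace BSpace

open Filter Topology Polynomial Module
open Matrix hiding map_smul

section Total

variable {k : Type u} [Field k] {d e m : ℕ}

/-- The block matrix `[[V, Z], [0, U]]` of a triple `(V, U, Z)`. -/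
def total (x : BSpace k d e) : Matrix (Fin d ⊕ Fin e) (Fin d ⊕ Fin e) k :=
  fromBlocks x.1 x.2.2 0 x.2.1

/-- The triple read off the blocks of a matrix, inverse to `BSpace.total` on block upper
triangular matrices; the lower left block is discarded. -/
def ofTotal (M : Matrix (Fin d ⊕ Fin e) (Fin d ⊕ Fin e) k) : BSpace k d e :=
  (M.toBlocks₁₁, M.toBlocks₂₂, M.toBlocks₁₂)

theorem ofTotal_total (x : BSpace k d e) : ofTotal (total x) = x := rfl

theorem total_ofTotal {M : Matrix (Fin d ⊕ Fin e) (Fin d ⊕ Fin e) k} (h : M.toBlocks₂₁ = 0) :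
    total (ofTotal M) = M := by
  rw [total, ← h]
  exact M.fromBlocks_toBlocks

theorem total_pow (x : BSpace k d e) (n : ℕ) : total x ^ n =
    fromBlocks (x.1 ^ n) (∑ i ∈ Finset.range n, x.1 ^ (n - 1 - i) * x.2.2 * x.2.1 ^ i) 0
      (x.2.1 ^ n) := by
  induction n with
  | zero => simp [fromBlocks_one]
  | succ n ih =>
    rw [pow_succ, ih, total, fromBlocks_multiply, Finset.sum_range_succ']
    simp [pow_succ, Matrix.sum_mul, Matrix.mul_assoc, add_comm, Nat.sub_sub]

/-- The variety `rep_{B₁}((d, e))`. -/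
def variety (k : Type u) [Field k] (m d e : ℕ) : Set (BSpace k d e) :=
  {x | x.1 ^ m = 0 ∧ x.2.1 ^ m = 0 ∧
    ∑ i ∈ Finset.range m, x.1 ^ (m - 1 - i) * x.2.2 * x.2.1 ^ i = 0}

theorem variety_nonempty (k : Type u) [Field k] (hm : m ≠ 0) (d e : ℕ) :
    (variety k m d e).Nonempty :=
  ⟨(0, 0, 0), zero_pow hm, zero_pow hm, Finset.sum_eq_zero fun i _ => by simp⟩

theorem mem_variety_iff_total_pow_eq_zero {x : BSpace k d e} :
    x ∈ variety k m d e ↔ total x ^ m = 0 := by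
  rw [total_pow, ← fromBlocks_zero, fromBlocks_inj, eq_self_iff_true, true_and]
  exact and_congr_right' and_comm

theorem ofTotal_mem_variety {M : Matrix (Fin d ⊕ Fin e) (Fin d ⊕ Fin e) k}
    (h : M.toBlocks₂₁ = 0) (hM : M ^ m = 0) : ofTotal M ∈ variety k m d e := by
  rwa [mem_variety_iff_total_pow_eq_zero, total_ofTotal h]

theorem total_add_smul_sub_total {x y : BSpace k d e} (h₁ : y.1 = x.1) (h₂ : y.2.1 = x.2.1)
    (t : k) : total x + t • (total y - total x) =
      total (x.1, x.2.1, x.2.2 + t • (y.2.2 - x.2.2)) := by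
  ext (i | i) (j | j) <;> simp [total, h₁, h₂]

theorem line_mem_variety {x y : BSpace k d e} (hx : x ∈ variety k m d e)
    (hy : y ∈ variety k m d e) (h₁ : y.1 = x.1) (h₂ : y.2.1 = x.2.1) (t : k) :
    (x.1, x.2.1, x.2.2 + t • (y.2.2 - x.2.2)) ∈ variety k m d e := by
  obtain ⟨hV, hU, hxZ⟩ := hx
  obtain ⟨-, -, hyZ⟩ := hy
  rw [h₁, h₂] at hyZ
  refine ⟨hV, hU, ?_⟩
  simp [Matrix.mul_add, Matrix.add_mul, Matrix.mul_sub, Matrix.sub_mul, Finset.sum_add_distrib,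
    ← Finset.smul_sum, hxZ, hyZ]

theorem tendsto_ofTotal (P : Matrix (Fin d ⊕ Fin e) (Fin d ⊕ Fin e) k[X]) (t₀ : k) :
    Tendsto (fun t => (ofTotal ((evalRingHom t).mapMatrix P) : BSpace k d e)) cofinite
      (𝓝 (ofTotal ((evalRingHom t₀).mapMatrix P))) := by
  let F : BIdx d e → k[X]
    | Sum.inl i => P (Sum.inl i.1) (Sum.inl i.2)
    | Sum.inr (Sum.inl i) => P (Sum.inr i.1) (Sum.inr i.2)
    | Sum.inr (Sum.inr i) => P (Sum.inl i.1) (Sum.inr i.2)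
  have hF : ∀ t : k, bCoords (ofTotal ((evalRingHom t).mapMatrix P)) = fun i => (F i).eval t :=
    fun t => by
      ext i
      rcases i with i | i | i <;> rfl
  let _ := zariskiTop k (BIdx d e)
  rw [(⟨rfl⟩ : IsInducing (bCoords (k := k) (d := d) (e := e))).tendsto_nhds_iff]
  simpa only [Function.comp_def, hF] using tendsto_zariski F t₀

variable (k d e) in
/-- The inclusion of the subspace on which `V` acts. -/
def inl : (Fin d → k) →ₗ[k] (Fin d ⊕ Fin e → k) :=
  (LinearEquiv.sumArrowLequivProdArrow (Fin d) (Fin e) k k).symm.toLinearMap ∘ₗ LinearMap.inl k _ _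

variable (k d e) in
/-- The projection to the quotient on which `U` acts. -/
def projRight : (Fin d ⊕ Fin e → k) →ₗ[k] (Fin e → k) :=
  LinearMap.funLeft k k Sum.inr

theorem inl_apply (w : Fin d → k) : inl k d e w = Sum.elim w 0 := by
  ext (i | i) <;> rfl

theorem isExtension_total (x : BSpace k d e) :
    IsExtension (toLin' (total x)) (toLin' x.1) (toLin' x.2.1) (inl k d e) (projRight k d e) where
  injective := fun v w h => by
    simpa [inl_apply] using congrArg (· ∘ Sum.inl) h
  surjective := LinearMap.funLeft_surjective_of_injective _ _ _ Sum.inr_injective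
  exact := fun v => by
    constructor
    · intro h
      refine ⟨v ∘ Sum.inl, ?_⟩
      rw [inl_apply, ← Sum.elim_comp_inl_inr v]
      exact congrArg (Sum.elim _) h.symm
    · rintro ⟨w, rfl⟩
      rfl
  apply_left := fun w => by simp [inl_apply, total, fromBlocks_mulVec]
  apply_right := fun v => by
    simp [projRight, total, fromBlocks_mulVec, LinearMap.funLeft, Function.comp_def]

theorem toBlocks_toMatrix'_left {S : End k (Fin d ⊕ Fin e → k)} {S' : End k (Fin d → k)}
    (h : ∀ w, S (inl k d e w) = inl k d e (S' w)) :
    (LinearMap.toMatrix' S).toBlocks₁₁ = LinearMap.toMatrix' S' ∧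
      (LinearMap.toMatrix' S).toBlocks₂₁ = 0 := by
  have hS : ∀ j, S (Pi.single (Sum.inl j) 1) = Sum.elim (S' (Pi.single j 1)) 0 := fun j => by
    rw [← inl_apply, ← h, inl_apply, Sum.elim_single_zero]
  constructor <;> ext i j
  · simp [toBlocks₁₁, LinearMap.toMatrix'_apply, hS]
  · simp [toBlocks₂₁, LinearMap.toMatrix'_apply, hS]

theorem toBlocks₂₂_toMatrix' {S : End k (Fin d ⊕ Fin e → k)} {U : End k (Fin e → k)}
    (h : ∀ v, projRight k d e (S v) = U (projRight k d e v)) :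
    (LinearMap.toMatrix' S).toBlocks₂₂ = LinearMap.toMatrix' U := by
  ext i j
  have hj : projRight k d e (Pi.single (Sum.inr j) 1) = Pi.single j 1 := by
    ext i
    simp [projRight, LinearMap.funLeft_apply, Pi.single_apply]
  have hij : S (Pi.single (Sum.inr j) 1) (Sum.inr i) = U (Pi.single j 1) i := by
    rw [← hj, ← h]
    rfl
  simpa [toBlocks₂₂, LinearMap.toMatrix'_apply] using hij

end Total

section RankSum

variable {k : Type u} [Field k] {d e m : ℕ}

/-- The sum of the ranks of all powers of `V` and `U` below the `m`-th, a bounded measure of how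
close a triple is to having generic Jordan types. -/
def rankSum (m : ℕ) (x : BSpace k d e) : ℕ :=
  ∑ i ∈ Finset.range m, ((x.1 ^ i).rank + (x.2.1 ^ i).rank)

theorem rankSum_le (m : ℕ) (x : BSpace k d e) : rankSum m x ≤ m * (d + e) := by
  refine (Finset.sum_le_card_nsmul _ _ (d + e) fun i _ => ?_).trans_eq (by simp)
  exact add_le_add (rank_le_width _) (rank_le_width _)

theorem eventually_rank_pow_le (P : Matrix (Fin d ⊕ Fin e) (Fin d ⊕ Fin e) k[X]) {x : BSpace k d e}
    {t₀ : k} (hx : ofTotal ((evalRingHom t₀).mapMatrix P) = x) (i : ℕ) : ∀ᶠ t in cofinite,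
      (x.1 ^ i).rank ≤ ((ofTotal ((evalRingHom t).mapMatrix P)).1 ^ i).rank ∧
      (x.2.1 ^ i).rank ≤ ((ofTotal ((evalRingHom t).mapMatrix P)).2.1 ^ i).rank := by
  have h₁ := eventually_rank_le (P.toBlocks₁₁ ^ i) t₀
  have h₂ := eventually_rank_le (P.toBlocks₂₂ ^ i) t₀
  simp only [map_pow] at h₁ h₂
  rw [← hx]
  exact h₁.and h₂

theorem finrank_range_toLin'_pow {n : Type*} [Fintype n] [DecidableEq n] (A : Matrix n n k)
    (a : ℕ) : finrank k (LinearMap.range (toLin' A ^ a)) = (A ^ a).rank := by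
  rw [← toLin'_pow]
  rfl

variable [Infinite k]

theorem mem_closure_of_isRankRaising {x : BSpace k d e} {S : End k (Fin d ⊕ Fin e → k)}
    (h : IsRankRaising m (toLin' (total x)) (toLin' x.1) (inl k d e) S) :
    x ∈ closure {y ∈ variety k m d e | rankSum m x < rankSum m y} := by
  obtain ⟨hpow, S', hS', a, ha, hlt⟩ := h
  obtain ⟨h₁₁, h₂₁⟩ := toBlocks_toMatrix'_left hS'
  set N := LinearMap.toMatrix' S with hN
  set P := polynomialLine (total x) N
  have hP : ∀ t : k, (evalRingHom t).mapMatrix P = total x + t • N := mapMatrix_polynomialLine _ _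
  have hx : ofTotal ((evalRingHom (0 : k)).mapMatrix P) = x := by
    rw [hP, zero_smul, add_zero, ofTotal_total]
  have hrank : ∀ᶠ t in cofinite, ∀ i ∈ Finset.range m, _ :=
    (Finset.range m).eventually_all.2 fun i _ => eventually_rank_pow_le P hx i
  have htend := tendsto_ofTotal P 0
  rw [hx] at htend
  refine mem_closure_of_tendsto htend ?_
  filter_upwards [hrank, eventually_cofinite_ne 0] with t hrank ht
  refine ⟨ofTotal_mem_variety ?_ ?_, Finset.sum_lt_sum
    (fun i hi => add_le_add (hrank i hi).1 (hrank i hi).2) ⟨a, Finset.mem_range.2 ha,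
      add_lt_add_of_lt_of_le ?_ (hrank a (Finset.mem_range.2 ha)).2⟩⟩
  · rw [hP]
    ext i j
    simpa [toBlocks₂₁, total] using Or.inr (congrFun (congrFun h₂₁ i) j)
  · rw [hP]
    refine toLin'.injective ?_
    simpa [hN, toLin'_pow] using hpow t
  · have hVt : (ofTotal ((evalRingHom t).mapMatrix P)).1 = x.1 + t • LinearMap.toMatrix' S' := by
      rw [hP, ← h₁₁]
      rfl
    rw [hVt, ← finrank_range_toLin'_pow, ← finrank_range_toLin'_pow, map_add, map_smul,
      toLin'_toMatrix']
    exact hlt t ht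

theorem mem_closure_of_not_isGeneric {x : BSpace k d e} (hx : x ∈ variety k m d e)
    (hV : ¬IsGeneric m (toLin' x.1)) :
    x ∈ closure {y ∈ variety k m d e | rankSum m x < rankSum m y} := by
  have hVm : toLin' x.1 ^ m = 0 := by rw [← toLin'_pow, hx.1, map_zero]
  have hTm : toLin' (total x) ^ m = 0 := by
    rw [← toLin'_pow, mem_variety_iff_total_pow_eq_zero.1 hx, map_zero]
  obtain ⟨c, i₀, i₁, hne, hle, hlt⟩ := exists_size_le_size_lt_of_not_isGeneric hVm hV
  obtain ⟨R, hR, hS⟩ :=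
    (isExtension_total x).exists_perturbation_isRankRaising hTm c hne hle hlt
  set N := LinearMap.toMatrix' R with hN
  have hT : ∀ s : k, LinearMap.toMatrix' (toLin' (total x) + s • R) = total x + s • N := fun s => by
    rw [map_add, map_smul, LinearMap.toMatrix'_toLin']
  set y : k → BSpace k d e := fun s => ofTotal (total x + s • N)
  have hy : ∀ s, toLin' (total (y s)) = toLin' (total x) + s • R ∧ (y s).1 = x.1 ∧
      (y s).2.1 = x.2.1 := fun s => by
    obtain ⟨h₁₁, h₂₁⟩ := toBlocks_toMatrix'_left (hR s).1.apply_left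
    have h₂₂ := toBlocks₂₂_toMatrix' (hR s).1.apply_right
    rw [hT] at h₁₁ h₂₁ h₂₂
    rw [total_ofTotal h₂₁, map_add, map_smul, hN, toLin'_toMatrix']
    exact ⟨rfl, h₁₁.trans (LinearMap.toMatrix'_toLin' _), h₂₂.trans (LinearMap.toMatrix'_toLin' _)⟩
  have hlim : Tendsto y cofinite (𝓝 x) := by
    have h := tendsto_ofTotal (polynomialLine (total x) N) 0
    simpa only [mapMatrix_polynomialLine, zero_smul, add_zero, ofTotal_total] using h
  rw [← closure_closure]
  refine mem_closure_of_tendsto hlim (hS.mono fun s ⟨S, hS⟩ => ?_)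
  obtain ⟨hT, hV, hU⟩ := hy s
  rw [← hT, ← hV] at hS
  have hrank : rankSum m x = rankSum m (y s) := by
    rw [rankSum, rankSum, hV, hU]
  rw [hrank]
  exact mem_closure_of_isRankRaising hS

end RankSum

section Transpose

variable {k : Type u} [Field k] {d e m : ℕ}

/-- The duality exchanging the roles of `V` and `U`. -/
def transpose (x : BSpace k d e) : BSpace k e d :=
  ((x.2.1)ᵀ, (x.1)ᵀ, (x.2.2)ᵀ)

theorem total_transpose (x : BSpace k d e) :
    total (transpose x) = reindexAlgEquiv k k (Equiv.sumComm (Fin d) (Fin e)) (total x)ᵀ := by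
  simp [total, transpose, fromBlocks_transpose]

theorem transpose_mem_variety {x : BSpace k d e} (hx : x ∈ variety k m d e) :
    transpose x ∈ variety k m e d := by
  rw [mem_variety_iff_total_pow_eq_zero] at hx ⊢
  rw [total_transpose, ← map_pow, ← transpose_pow, hx, transpose_zero, map_zero]

theorem rankSum_transpose (m : ℕ) (x : BSpace k d e) :
    rankSum m (transpose x) = rankSum m x :=
  Finset.sum_congr rfl fun i _ => by
    simp only [transpose, ← transpose_pow, rank_transpose, add_comm]

theorem continuous_transpose : Continuous (transpose : BSpace k d e → BSpace k e d) := by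
  let σ : BIdx e d → BIdx d e
    | Sum.inl i => Sum.inr (Sum.inl i.swap)
    | Sum.inr (Sum.inl i) => Sum.inl i.swap
    | Sum.inr (Sum.inr i) => Sum.inr (Sum.inr i.swap)
  have hσ : bCoords ∘ transpose = (· ∘ σ) ∘ bCoords (k := k) (d := d) (e := e) := by
    ext x (i | i | i) <;> rfl
  let _ := zariskiTop k (BIdx d e)
  let _ := zariskiTop k (BIdx e d)
  refine continuous_induced_rng.2 ?_
  rw [hσ]
  exact (continuous_zariski_comp σ).comp continuous_induced_dom

end Transpose

section GenericLocus

variable {k : Type u} [Field k] {d e m : ℕ}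

/-- The triples in the variety for which `V` and `U` have generic Jordan type. The condition on
`U` is imposed on its transpose, which has the same Jordan type. -/
def genericLocus (k : Type u) [Field k] (m d e : ℕ) : Set (BSpace k d e) :=
  {x ∈ variety k m d e | IsGeneric m (toLin' x.1) ∧ IsGeneric m (toLin' (x.2.1)ᵀ)}

theorem mem_closure_of_notMem_genericLocus [Infinite k] {x : BSpace k d e}
    (hx : x ∈ variety k m d e) (h : x ∉ genericLocus k m d e) :
    x ∈ closure {y ∈ variety k m d e | rankSum m x < rankSum m y} := by
  by_cases hV : IsGeneric m (toLin' x.1)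
  · have hU : ¬IsGeneric m (toLin' (transpose x).1) := fun hU => h ⟨hx, hV, hU⟩
    refine map_mem_closure continuous_transpose
      (mem_closure_of_not_isGeneric (transpose_mem_variety hx) hU) fun y hy => ?_
    refine ⟨transpose_mem_variety hy.1, ?_⟩
    rw [rankSum_transpose, ← rankSum_transpose m x]
    exact hy.2
  · exact mem_closure_of_not_isGeneric hx hV

theorem variety_subset_closure_genericLocus (k : Type u) [Field k] [Infinite k] (m d e : ℕ) :
    variety k m d e ⊆ closure (genericLocus k m d e) :=
  subset_closure_of_forall_mem_closure_lt (rankSum m)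
    ⟨m * (d + e), Set.forall_mem_image.2 fun x _ => rankSum_le m x⟩
    fun _ => mem_closure_of_notMem_genericLocus

theorem ofTotal_mem_genericLocus_of_semiconjBy {x : BSpace k d e} (hx : x ∈ genericLocus k m d e)
    {g : Matrix (Fin d) (Fin d) k} {h : Matrix (Fin e) (Fin e) k} (hg : IsUnit g) (hh : IsUnit h)
    {δ : k} (hδ : δ ≠ 0) {P : Matrix (Fin d ⊕ Fin e) (Fin d ⊕ Fin e) k}
    (hP : SemiconjBy (fromBlocks g 0 0 h) (δ • total x) P) :
    ofTotal P ∈ genericLocus k m d e := by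
  obtain ⟨hxm, hV, hU⟩ := hx
  have hM : IsUnit (fromBlocks g 0 0 h) := isUnit_fromBlocks_zero₂₁.2 ⟨hg, hh⟩
  have hPm : P ^ m = 0 := by
    have hpow := (hP.pow_right m).eq
    rwa [_root_.smul_pow, mem_variety_iff_total_pow_eq_zero.1 hxm, smul_zero, mul_zero, eq_comm,
      hM.mul_left_eq_zero] at hpow
  have hblocks := hP.eq
  rw [← P.fromBlocks_toBlocks, total, fromBlocks_smul, fromBlocks_multiply, fromBlocks_multiply,
    fromBlocks_inj] at hblocks
  simp only [smul_zero, Matrix.mul_zero, Matrix.zero_mul, add_zero, zero_add] at hblocks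
  obtain ⟨h₁₁, -, h₂₁, h₂₂⟩ := hblocks
  have hP₂₁ : P.toBlocks₂₁ = 0 := by
    rw [← mul_nonsing_inv_cancel_right g P.toBlocks₂₁ ((isUnit_iff_isUnit_det g).1 hg), ← h₂₁,
      Matrix.zero_mul]
  refine ⟨ofTotal_mem_variety hP₂₁ hPm, hV.of_semiconjBy hg hδ h₁₁, ?_⟩
  exact hU.transpose_of_semiconjBy hh hδ h₂₂

theorem exists_semiconjBy_total {x s : BSpace k d e} (hx : x ∈ genericLocus k m d e)
    (hs : s ∈ genericLocus k m d e) :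
    ∃ (g : Matrix (Fin d) (Fin d) k) (h : Matrix (Fin e) (Fin e) k) (y : BSpace k d e),
      IsUnit (fromBlocks g 0 0 h) ∧ y ∈ variety k m d e ∧ y.1 = x.1 ∧ y.2.1 = x.2.1 ∧
        SemiconjBy (fromBlocks g 0 0 h) (total y) (total s) := by
  obtain ⟨g, hg, hgV⟩ := hx.2.1.exists_isUnit_semiconjBy hs.2.1
  obtain ⟨h, hh, hhU⟩ := hx.2.2.exists_isUnit_transpose_semiconjBy hs.2.2
  have hM : IsUnit (fromBlocks g 0 0 h) := isUnit_fromBlocks_zero₂₁.2 ⟨hg, hh⟩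
  let y : BSpace k d e := (x.1, x.2.1, g⁻¹ * s.2.2 * h)
  have hMy : SemiconjBy (fromBlocks g 0 0 h) (total y) (total s) := by
    have hZ : g * (g⁻¹ * s.2.2 * h) = s.2.2 * h := by
      rw [Matrix.mul_assoc, mul_nonsing_inv_cancel_left _ _ ((isUnit_iff_isUnit_det g).1 hg)]
    simp [SemiconjBy, total, y, fromBlocks_multiply, hgV.eq, hhU.eq, hZ]
  refine ⟨g, h, y, hM, ?_, rfl, rfl, hMy⟩
  have hpow := (hMy.pow_right m).eq
  rwa [mem_variety_iff_total_pow_eq_zero.1 hs.1, zero_mul, hM.mul_right_eq_zero,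
    ← mem_variety_iff_total_pow_eq_zero] at hpow

theorem isPreirreducible_genericLocus (k : Type u) [Field k] [Infinite k] (m d e : ℕ) :
    IsPreirreducible (genericLocus k m d e) := by
  refine isPreirreducible_of_forall_exists_curve (K := k) fun x hx s hs => ?_
  obtain ⟨g, h, y, hM, hy, hV, hU, hys⟩ := exists_semiconjBy_total hx hs
  obtain ⟨P, hP₀, hP₁, hP⟩ := exists_polynomial_conjugation hM (total x) (total y)
  refine ⟨fun t => ofTotal ((evalRingHom t).mapMatrix P), tendsto_ofTotal P, ?_,
    ⟨0, congrArg ofTotal hP₀⟩, ⟨1, ?_⟩⟩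
  · filter_upwards [hP] with t ⟨hMt, δ, hδ, hPt⟩
    have hline : 1 + t • (fromBlocks g 0 0 h - 1) =
        fromBlocks (1 + t • (g - 1)) 0 0 (1 + t • (h - 1)) := by
      ext (i | i) (j | j) <;> simp [one_apply]
    rw [hline] at hMt hPt
    rw [total_add_smul_sub_total hV hU] at hPt
    obtain ⟨hgt, hht⟩ := isUnit_fromBlocks_zero₂₁.1 hMt
    exact ofTotal_mem_genericLocus_of_semiconjBy
      ⟨line_mem_variety hx.1 hy hV hU t, hx.2⟩ hgt hht hδ hPt
  · have hPs : (evalRingHom 1).mapMatrix P = total s :=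
      hM.mul_right_cancel (hP₁.eq.symm.trans hys.eq)
    exact congrArg ofTotal hPs

end GenericLocus

end BSpace

theorem B_one_geometrically_irreducible_general (k : Type u) [Field k] [Infinite k]
    (m : ℕ) (hm : m ≠ 0) (d e : ℕ) :
    @IsIrreducible _ (bTop k d e)
      {x : BSpace k d e | x.1 ^ m = 0 ∧ x.2.1 ^ m = 0 ∧
        ∑ i ∈ Finset.range m, x.1 ^ (m - 1 - i) * x.2.2 * x.2.1 ^ i = 0} := by
  refine ⟨BSpace.variety_nonempty k hm d e, ?_⟩
  rw [← isPreirreducible_iff_closure]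
  have hclosure : closure (BSpace.variety k m d e) = closure (BSpace.genericLocus k m d e) :=
    (closure_minimal (BSpace.variety_subset_closure_genericLocus k m d e) isClosed_closure).antisymm
      (closure_mono fun _ hx => hx.1)
  change IsPreirreducible (closure (BSpace.variety k m d e))
  rw [hclosure]
  exact (BSpace.isPreirreducible_genericLocus k m d e).closure

/-- For every `m ≥ 2` the algebra `B₁ = A(1, m, m-1)` is geometrically
irreducible: for all `d, e ∈ ℕ` the Zariski-closed subset
`{(V, U, Z) : V^m = 0, U^m = 0, ∑_{i=0}^{m-1} V^{m-1-i} Z U^i = 0}` of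
`M_{d×d}(k) × M_{e×e}(k) × M_{d×e}(k)` is irreducible. -/
theorem B_one_geometrically_irreducible (k : Type u) [Field k] [IsAlgClosed k]
    (m : ℕ) (hm : 2 ≤ m) (d e : ℕ) :
    @IsIrreducible _ (bTop k d e)
      {x : BSpace k d e | x.1 ^ m = 0 ∧ x.2.1 ^ m = 0 ∧
        ∑ i ∈ Finset.range m, x.1 ^ (m - 1 - i) * x.2.2 * x.2.1 ^ i = 0} := by
  have := IsAlgClosed.instInfinite (K := k)
  exact B_one_geometrically_irreducible_general k m (by omega) d e
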